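/- Let k be a field of characteristic zero and A a commutative k-algebra (not assumed noetherian). If Ω_{A/k} = 0, then A is integral over k (every element of A is the root of a monic polynomial with coefficients in k). -/

import Mathlib

/-!
Let `a` be transcendental over a domain `R` of characteristic zero. As `R[X] → A`, `X ↦ a`, is
injective, some prime of `A` contracts to zero in `R[X]`, so the image `x` of `a` in its residue
field `L` is still transcendental. In characteristic zero `L` is formally smooth over `R[X]`, hence
`L ⊗ Ω_{R[X]/R} → Ω_{L/R}` is injective. It sends the basis element `1 ⊗ dX` to `dx`, so `dx ≠ 0`,
and therefore `da ≠ 0`.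
-/

open Polynomial TensorProduct KaehlerDifferential

theorem formallySmooth_of_field_of_charZero (K L : Type*) [Field K] [CharZero K] [Field L]
    [Algebra K L] : Algebra.FormallySmooth K L := by
  obtain ⟨s, hs⟩ := exists_isTranscendenceBasis K L
  have := hs.isAlgebraic_field
  exact .of_algebraicIndependent_of_isSeparable hs.1

theorem formallySmooth_of_faithfulSMul_of_charZero (S L : Type*) [CommRing S] [CharZero S]
    [Field L] [Algebra S L] [FaithfulSMul S L] : Algebra.FormallySmooth S L := by
  have : IsDomain S := (FaithfulSMul.algebraMap_injective S L).isDomain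
  let := FractionRing.liftAlgebra S L
  have := FractionRing.isScalarTower_liftAlgebra S L
  have : Algebra.FormallySmooth S (FractionRing S) := .of_isLocalization (nonZeroDivisors S)
  have := formallySmooth_of_field_of_charZero (FractionRing S) L
  exact .comp S (FractionRing S) L

theorem mapBaseChange_injective_of_formallySmooth (R S T : Type*) [CommRing R] [CommRing S]
    [CommRing T] [Algebra R S] [Algebra R T] [Algebra S T] [IsScalarTower R S T]
    [Algebra.FormallySmooth S T] : Function.Injective (mapBaseChange R S T) := by
  refine (injective_iff_map_eq_zero _).mpr fun x hx ↦ ?_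
  obtain ⟨y, rfl⟩ := (Algebra.H1Cotangent.exact_δ_mapBaseChange R S T x).mp hx
  rw [Subsingleton.elim y 0, map_zero]

theorem one_tmul_D_X_ne_zero (R T : Type*) [CommRing R] [CommRing T] [Nontrivial T]
    [Algebra R[X] T] : (1 : T) ⊗ₜ[R[X]] D R R[X] X ≠ 0 := by
  let e : T ⊗[R[X]] Ω[R[X]⁄R] ≃ₗ[R[X]] T :=
    (polynomialEquiv R).lTensor T ≪≫ₗ TensorProduct.rid R[X] T
  have he : e (1 ⊗ₜ D R R[X] X) = 1 := by simp [e]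
  intro h
  rw [h, map_zero] at he
  exact zero_ne_one he

theorem D_ne_zero_of_transcendental {R L : Type*} [CommRing R] [CharZero R] [Field L] [Algebra R L]
    {x : L} (hx : Transcendental R x) : D R L x ≠ 0 := by
  algebraize [(aeval x : R[X] →ₐ[R] L).toRingHom]
  have : IsScalarTower R R[X] L := .of_algebraMap_eq' (aeval x).comp_algebraMap.symm
  have : FaithfulSMul R[X] L :=
    (faithfulSMul_iff_algebraMap_injective R[X] L).mpr (transcendental_iff_injective.mp hx)
  have := formallySmooth_of_faithfulSMul_of_charZero R[X] L
  have hX : mapBaseChange R R[X] L (1 ⊗ₜ D R R[X] X) = D R L x := by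
    rw [mapBaseChange_tmul, one_smul, map_D]
    exact congrArg (D R L) (aeval_X x)
  rw [← hX]
  exact (map_ne_zero_iff _ (mapBaseChange_injective_of_formallySmooth R R[X] L)).mpr
    (one_tmul_D_X_ne_zero R L)

theorem exists_prime_transcendental_residueField {R A : Type*} [CommRing R] [IsDomain R]
    [CommRing A] [Algebra R A] {a : A} (ha : Transcendental R a) :
    ∃ (p : Ideal A) (_ : p.IsPrime), Transcendental R (algebraMap A p.ResidueField a) := by
  obtain ⟨p, hp, hcomap⟩ := Ideal.exists_comap_eq_of_mem_minimalPrimes_of_injective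
    (f := (aeval a : R[X] →ₐ[R] A).toRingHom) (transcendental_iff_injective.mp ha) ⊥
    (by rw [IsDomain.minimalPrimes_eq_singleton_bot]; rfl)
  refine ⟨p, hp, transcendental_iff.mpr fun q hq ↦ ?_⟩
  rw [aeval_algebraMap_apply, Ideal.algebraMap_residueField_eq_zero] at hq
  have hq' : q ∈ p.comap (aeval a : R[X] →ₐ[R] A).toRingHom := hq
  rwa [hcomap, Ideal.mem_bot] at hq'

theorem integral_of_vanishing_kaehler_differentials_general {R A : Type*} [CommRing R] [IsDomain R]
    [CharZero R] [CommRing A] [Algebra R A] {a : A} (ha : D R A a = 0) : IsAlgebraic R a := by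
  by_contra htrans
  obtain ⟨p, _, hp⟩ := exists_prime_transcendental_residueField htrans
  apply D_ne_zero_of_transcendental hp
  rw [← map_D R R A p.ResidueField a, ha, map_zero]

/-- Let `k` be a field of characteristic zero and `A` a commutative `k`-algebra (not
necessarily noetherian). If `Ω_{A/k} = 0`, then `A` is integral over `k`: every element of
`A` is the root of a monic polynomial with coefficients in `k`. -/
theorem integral_of_vanishing_kaehler_differentials
    (k A : Type*) [Field k] [CharZero k] [CommRing A] [Algebra k A]
    (h : Subsingleton (Ω[A⁄k])) :
    ∀ a : A, IsIntegral k a :=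
  fun _ ↦ (integral_of_vanishing_kaehler_differentials_general (Subsingleton.elim _ _)).isIntegral
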